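/- Let C be a locally presentable category and S a small set of objects of C. Then S generates C under colimits if and only if S is a detecting set, i.e. every morphism f : X → Y of C such that composition with f induces a bijection Hom(Z, X) → Hom(Z, Y) for every Z ∈ S is an isomorphism. -/

import Mathlib

open CategoryTheory CategoryTheory.Limits

universe w v u

namespace Paper

/-- A full subcategory (given by a set of objects) is closed under isomorphisms. -/
def IsoClosed {C : Type*} [Category C] (P : Set C) : Prop :=
  ∀ ⦃X Y : C⦄, X ∈ P → Nonempty (X ≅ Y) → Y ∈ P

/-- A set of objects is closed under all colimits of shapes `J : Type w` that exist in `C`: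
whenever a diagram valued in `P` admits a colimit cocone, its point belongs to `P`. -/
def ColimitClosed {C : Type u} [Category.{v} C] (P : Set C) : Prop :=
  ∀ (J : Type w) (_ : SmallCategory J) (F : J ⥤ C) (c : Cocone F),
    Nonempty (IsColimit c) → (∀ j : J, F.obj j ∈ P) → c.pt ∈ P

/-- A set of objects is closed under all limits of shapes `J : Type w` that exist in `C`. -/
def LimitClosed {C : Type u} [Category.{v} C] (P : Set C) : Prop :=
  ∀ (J : Type w) (_ : SmallCategory J) (F : J ⥤ C) (c : Cone F),
    Nonempty (IsLimit c) → (∀ j : J, F.obj j ∈ P) → c.pt ∈ P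

/-- `S` generates `C` under colimits: the only set of objects containing `S` which is
closed under isomorphisms and under all colimits that exist in `C` is all of `C`. -/
def GeneratesUnderColimits {C : Type u} [Category.{v} C] (S : Set C) : Prop :=
  ∀ P : Set C, S ⊆ P → IsoClosed P → ColimitClosed.{w} P → ∀ X : C, X ∈ P

/-- The smallest set of objects containing `S` which is closed under isomorphisms and
under all colimits (of shapes in `Type w`) that exist in `C`. -/
def colimitClosure {C : Type u} [Category.{v} C] (S : Set C) : Set C :=
  ⋂₀ {P : Set C | S ⊆ P ∧ IsoClosed P ∧ ColimitClosed.{w} P}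

/-- A category `J` is `κ`-filtered if every diagram indexed by a small category with
fewer than `κ` arrows admits a cocone. -/
def IsCardinalFiltered (J : Type w) [SmallCategory J] (κ : Cardinal.{w}) : Prop :=
  ∀ (K : Type w) (_ : SmallCategory K) (F : K ⥤ J),
    Cardinal.mk (Arrow K) < κ → Nonempty (Cocone F)

/-- A set of objects is closed under colimits of `κ`-filtered shapes that exist in `C`. -/
def FilteredColimitClosed {C : Type u} [Category.{v} C] (κ : Cardinal.{w}) (P : Set C) :
    Prop :=
  ∀ (J : Type w) (_ : SmallCategory J), IsCardinalFiltered J κ →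
    ∀ (F : J ⥤ C) (c : Cocone F),
      Nonempty (IsColimit c) → (∀ j : J, F.obj j ∈ P) → c.pt ∈ P

/-- An object `X` of a large category `C` is `κ`-presentable if its Hom-functor
`Hom(X, -) : C ⥤ Type u` preserves colimits of `κ`-filtered (small) shapes. -/
def IsPresentableObj {C : Type (u + 1)} [Category.{u} C] (κ : Cardinal.{u}) (X : C) : Prop :=
  ∀ (J : Type u) (_ : SmallCategory J), IsCardinalFiltered J κ →
    PreservesColimitsOfShape J (coyoneda.obj (Opposite.op X))

/-- A large category `C` is locally presentable if it has all small colimits and there is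
a regular cardinal `κ` such that `C` has, up to isomorphism, only a small set of
`κ`-presentable objects and every object of `C` is a `κ`-filtered colimit of
`κ`-presentable objects. -/
def LocallyPresentable (C : Type (u + 1)) [Category.{u} C] : Prop :=
  HasColimits C ∧
    ∃ κ : Cardinal.{u}, κ.IsRegular ∧
      (∃ S : Set C, Small.{u} S ∧
        ∀ X : C, IsPresentableObj κ X → ∃ Y ∈ S, Nonempty (X ≅ Y)) ∧
      ∀ X : C, ∃ (J : Type u) (_ : SmallCategory J) (F : J ⥤ C) (c : Cocone F),
        IsCardinalFiltered J κ ∧ (∀ j : J, IsPresentableObj κ (F.obj j)) ∧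
        c.pt = X ∧ Nonempty (IsColimit c)

end Paper

namespace CategoryTheory

/-- A small family of presentable objects is uniformly `κ`-presentable for some regular `κ`. -/
lemma ObjectProperty.exists_le_isCardinalPresentable {C : Type u} [Category.{v} C]
    (P : ObjectProperty C) [ObjectProperty.Small.{w} P]
    (hP : ∀ X, P X → IsPresentable.{w} X) :
    ∃ (κ : Cardinal.{w}) (_ : Fact κ.IsRegular), P ≤ isCardinalPresentable C κ := by
  choose κ hκ hX using fun X : Subtype P ↦ (hP X.1 X.2).exists_cardinal
  obtain ⟨κ', h₁, h₂⟩ := HasCardinalLT.exists_regular_cardinal_forall.{w}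
    (fun X : Subtype P ↦ (κ X).ord.ToType)
  have : Fact κ'.IsRegular := ⟨h₁⟩
  refine ⟨κ', this, fun X h ↦ ?_⟩
  have hle : κ ⟨X, h⟩ ≤ κ' := by
    simpa [hasCardinalLT_iff_cardinal_mk_lt] using (h₂ ⟨X, h⟩).le
  have : IsCardinalPresentable X (κ ⟨X, h⟩) := hX ⟨X, h⟩
  exact isCardinalPresentable_of_le X hle

/-- For a small detecting family of `κ`-presentable objects in a cocomplete category, the closure
of the family under colimits of size less than `κ` is dense. -/
lemma ObjectProperty.IsDetecting.isDense_colimitsCardinalClosure_ι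
    {C : Type u} [Category.{v} C] [HasColimitsOfSize.{w, w} C] [LocallySmall.{w} C]
    {P : ObjectProperty C} [ObjectProperty.Small.{w} P] {κ : Cardinal.{w}} [Fact κ.IsRegular]
    (hP : P.IsDetecting) (hPκ : P ≤ isCardinalPresentable C κ) :
    (P.colimitsCardinalClosure κ).ι.IsDense where
  isDenseAt X := by
    let Q := P.colimitsCardinalClosure κ
    let E := Functor.LeftExtension.mk _ Q.ι.rightUnitor.inv
    have : HasColimitsOfShape (CostructuredArrow Q.ι X) C :=
      hasColimitsOfShape_of_equivalence
        (equivSmallModel.{w} (CostructuredArrow Q.ι X)).symm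
    have : Q.IsClosedUnderColimitsOfShape WalkingParallelPair := by
      apply ObjectProperty.isClosedUnderColimitsOfShape_colimitsCardinalClosure
      refine .of_le ?_ (Cardinal.IsRegular.aleph0_le Fact.out)
      simp only [hasCardinalLT_aleph0_iff]
      infer_instance
    let Φ := CostructuredArrow.proj Q.ι X ⋙ Q.ι
    have hι (j : CostructuredArrow Q.ι X) :
        colimit.ι Φ j ≫ colimit.desc Φ (E.coconeAt X) = j.hom := by
      simp [Φ, E]
      exact Category.id_comp _
    have : IsIso (colimit.desc Φ (E.coconeAt X)) := by
      refine hP _ fun G hG g ↦ ?_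
      have : IsCardinalPresentable G κ := hPκ _ hG
      let γ : CostructuredArrow Q.ι X :=
        CostructuredArrow.mk (Y := ⟨G, P.le_colimitsCardinalClosure _ _ hG⟩) (by exact g)
      have hinj (g₁ g₂ : G ⟶ colimit Φ) (h : g₁ ≫ colimit.desc Φ (E.coconeAt X) =
          g₂ ≫ colimit.desc Φ (E.coconeAt X)) : g₁ = g₂ := by
        obtain ⟨j₁, f₁, hf₁⟩ :=
          IsCardinalPresentable.exists_hom_of_isColimit κ (colimit.isColimit _) g₁
        obtain ⟨j₂, f₂, hf₂⟩ :=
          IsCardinalPresentable.exists_hom_of_isColimit κ (colimit.isColimit _) g₂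
        obtain ⟨j, φ₁, φ₂, rfl, rfl⟩ : ∃ (j : CostructuredArrow Q.ι X) (φ₁ φ₂ : G ⟶ Φ.obj j),
            φ₁ ≫ colimit.ι _ _ = g₁ ∧ φ₂ ≫ colimit.ι _ _ = g₂ :=
          ⟨IsFiltered.max j₁ j₂, f₁ ≫ Φ.map (IsFiltered.leftToMax j₁ j₂),
            f₂ ≫ Φ.map (IsFiltered.rightToMax j₁ j₂), by simpa, by simpa⟩
        let obj : Q.FullSubcategory :=
          ⟨coequalizer φ₁ φ₂, by
            apply ObjectProperty.prop_colimit
            rintro (_ | _)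
            · exact P.le_colimitsCardinalClosure _ _ hG
            · exact j.left.2⟩
        rw [Category.assoc, Category.assoc, hι] at h
        let a : Q.ι.obj obj ⟶ X := coequalizer.desc j.hom h
        let ψ : j ⟶ CostructuredArrow.mk a :=
          CostructuredArrow.homMk (ObjectProperty.homMk (coequalizer.π _ _))
            (coequalizer.π_desc _ _)
        rw [← colimit.w Φ ψ]
        apply coequalizer.condition_assoc
      exact ⟨colimit.ι Φ γ, hι γ, fun g' hg' ↦ hinj _ _ (hg'.trans (hι γ).symm)⟩
    exact ⟨IsColimit.ofIsoColimit (colimit.isColimit _) (Cocone.ext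
      (asIso (colimit.desc _ (E.coconeAt X))))⟩

end CategoryTheory

namespace Paper

lemma isCardinalFiltered_iff_mathlib (J : Type w) [SmallCategory J] (κ : Cardinal.{w})
    [Fact κ.IsRegular] :
    IsCardinalFiltered J κ ↔ CategoryTheory.IsCardinalFiltered J κ :=
  ⟨fun h ↦ ⟨fun F hA ↦ h _ _ F ((hasCardinalLT_iff_cardinal_mk_lt _ _).1 hA)⟩,
    fun h _ _ F hA ↦ h.nonempty_cocone F ((hasCardinalLT_iff_cardinal_mk_lt _ _).2 hA)⟩

lemma isPresentableObj_iff_isCardinalPresentable {C : Type (u + 1)} [Category.{u} C]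
    (κ : Cardinal.{u}) [Fact κ.IsRegular] (X : C) :
    IsPresentableObj κ X ↔ IsCardinalPresentable X κ :=
  ⟨fun h ↦ ⟨fun J _ hJ ↦ h J _ ((isCardinalFiltered_iff_mathlib J κ).2 hJ)⟩,
    fun h J _ hJ ↦
      have := (isCardinalFiltered_iff_mathlib J κ).1 hJ
      h.preservesColimitOfShape J⟩

lemma LocallyPresentable.isLocallyPresentable {C : Type (u + 1)} [Category.{u} C]
    (hC : LocallyPresentable C) : IsLocallyPresentable.{u} C := by
  obtain ⟨_, κ, hκ, ⟨T, _, hT⟩, hgen⟩ := hC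
  have : Fact κ.IsRegular := ⟨hκ⟩
  have : ObjectProperty.EssentiallySmall.{u} (isCardinalPresentable C κ) :=
    ⟨fun X ↦ X ∈ T, ‹Small.{u} T›,
      fun X hX ↦ by
        obtain ⟨Y, hY, e⟩ := hT X ((isPresentableObj_iff_isCardinalPresentable κ X).2 hX)
        exact ⟨Y, hY, e⟩⟩
  have hP : (isCardinalPresentable C κ).IsCardinalFilteredGenerator κ := by
    refine ⟨le_rfl, fun X ↦ ?_⟩
    obtain ⟨J, _, F, c, hJ, hF, rfl, ⟨hc⟩⟩ := hgen X
    exact ⟨J, inferInstance, (isCardinalFiltered_iff_mathlib J κ).1 hJ,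
      ⟨{  diag := F
          ι := c.ι
          isColimit := hc
          prop_diag_obj j := (isPresentableObj_iff_isCardinalPresentable κ _).1 (hF j) }⟩⟩
  have := hP.hasCardinalFilteredGenerator
  exact ⟨κ, inferInstance, { }⟩

/-- The objects `Z` such that `Hom(Z, f)` is bijective are closed under colimits. -/
lemma colimitClosed_bijective_comp {C : Type u} [Category.{v} C] {X Y : C} (f : X ⟶ Y) :
    ColimitClosed.{w} {Z : C | Function.Bijective fun g : Z ⟶ X ↦ g ≫ f} := by
  rintro J _ F c ⟨hc⟩ hF
  refine ⟨fun g₁ g₂ h ↦ hc.hom_ext fun j ↦ (hF j).1 ?_, fun g ↦ ?_⟩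
  · dsimp at h
    simp [h]
  · choose φ hφ using fun j ↦ (hF j).2 (c.ι.app j ≫ g)
    dsimp at hφ
    let s : Cocone F :=
      { pt := X
        ι :=
          { app := φ
            naturality i j u := (hF i).1 (by simp [hφ]) } }
    exact ⟨hc.desc s, hc.hom_ext fun j ↦ by simp [s, hφ]⟩

lemma isoClosed_bijective_comp {C : Type u} [Category.{v} C] {X Y : C} (f : X ⟶ Y) :
    IsoClosed {Z : C | Function.Bijective fun g : Z ⟶ X ↦ g ≫ f} := by
  rintro Z W hZ ⟨e⟩
  refine ⟨fun g₁ g₂ h ↦ (cancel_epi e.hom).1 (hZ.1 ?_), fun g ↦ ?_⟩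
  · dsimp at h
    simp [h]
  · obtain ⟨φ, hφ⟩ := hZ.2 (e.hom ≫ g)
    dsimp at hφ
    exact ⟨e.inv ≫ φ, by simp [hφ]⟩

lemma GeneratesUnderColimits.isIso {C : Type u} [Category.{v} C] {S : Set C}
    (hS : GeneratesUnderColimits.{w} S) {X Y : C} (f : X ⟶ Y)
    (hf : ∀ Z ∈ S, Function.Bijective fun g : Z ⟶ X ↦ g ≫ f) : IsIso f := by
  have h := hS _ hf (isoClosed_bijective_comp f) (colimitClosed_bijective_comp f)
  obtain ⟨r, hr⟩ := (h Y).2 (𝟙 Y)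
  dsimp at hr
  exact ⟨r, (h X).1 (by simp [hr]), hr⟩

lemma generatesUnderColimits_of_isDetecting {C : Type (u + 1)} [Category.{u} C]
    [IsLocallyPresentable.{u} C] [HasColimits C] (S : Set C) [Small.{u} S]
    (hS : ObjectProperty.IsDetecting (fun X ↦ X ∈ S)) :
    GeneratesUnderColimits.{u} S := by
  intro P hSP hiso hcolim X
  let Q : ObjectProperty C := fun X ↦ X ∈ S
  have : ObjectProperty.Small.{u} Q := ‹Small.{u} S›
  obtain ⟨κ, _, hκ⟩ := Q.exists_le_isCardinalPresentable (fun _ _ ↦ inferInstance)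
  have := hS.isDense_colimitsCardinalClosure_ι hκ
  let P' : ObjectProperty C := fun X ↦ X ∈ P
  have : P'.IsClosedUnderIsomorphisms := ⟨fun e h ↦ hiso h ⟨e⟩⟩
  have hle : Q.colimitsCardinalClosure κ ≤ P' :=
    Q.colimitsCardinalClosure_le κ
      (fun J _ _ ↦ ⟨fun Y ⟨p⟩ ↦ hcolim J _ p.diag (.mk Y p.ι) ⟨p.isColimit⟩ p.prop_diag_obj⟩)
      (fun _ h ↦ hSP h)
  let e := equivSmallModel.{u} (CostructuredArrow (Q.colimitsCardinalClosure κ).ι X)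
  exact hcolim _ _ _ _ ⟨((Q.colimitsCardinalClosure κ).ι.denseAt X).whiskerEquivalence e.symm⟩
    (fun j ↦ hle _ (e.inverse.obj j).left.property)

/-!
STATEMENT 7 (`Gen_Crit`): In a locally presentable category `C`, a small set of
objects `S` generates `C` under colimits if and only if `S` is a detecting set.
-/

theorem gen_crit {C : Type (u + 1)} [Category.{u} C] (hC : LocallyPresentable C)
    (S : Set C) (hS : Small.{u} S) :
    GeneratesUnderColimits.{u} S ↔
      ∀ {X Y : C} (f : X ⟶ Y),
        (∀ Z ∈ S, Function.Bijective fun g : Z ⟶ X => g ≫ f) → IsIso f := by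
  have := hC.1
  have := hC.isLocallyPresentable
  refine ⟨fun h _ _ f hf ↦ h.isIso f hf, fun h ↦ ?_⟩
  exact generatesUnderColimits_of_isDetecting S fun _ _ f hf ↦
    h f fun Z hZ ↦ Function.bijective_iff_existsUnique _ |>.2 (hf Z hZ)

end Paper
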